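/- arXiv:2405.19145 — 3 statements merged into one kernel-verified Lean document; each statement's English description precedes it below -/
import Mathlib

section
/- Knight's identity: for all real numbers a, b and all τ ∈ [0,1], ρ_τ(a − b) − ρ_τ(a) = −b·(τ − 1{a ≤ 0}) + ∫₀ᵇ (1{a ≤ s} − 1{a ≤ 0}) ds, where the integral is the (signed) interval integral from 0 to b. -/
/-!
The positive part `s ↦ max (s - a) 0` is continuous with right derivative `1{a ≤ s}`, so the
fundamental theorem of calculus gives `∫₀ᵇ 1{a ≤ s} ds = (b - a)⁺ - (-a)⁺`
(`integral_indicator_le`). Knight's identity then reduces to linear arithmetic, by cases on the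
signs of `a` and `a - b`.
-/

/-- The check (quantile loss) function `ρ_τ(u) = (τ − 1{u ≤ 0})·u`. -/
noncomputable def checkLoss (τ u : ℝ) : ℝ := (τ - if u ≤ 0 then 1 else 0) * u

theorem monotone_indicator_le (a : ℝ) : Monotone fun s : ℝ => if a ≤ s then (1 : ℝ) else 0 := by
  intro x y hxy
  dsimp only
  split_ifs with h1 h2
  · exact le_rfl
  · exact absurd (h1.trans hxy) h2
  · exact zero_le_one
  · exact le_rfl

theorem hasDerivWithinAt_posPart (a s : ℝ) :
    HasDerivWithinAt (fun s : ℝ => max (s - a) 0) (if a ≤ s then 1 else 0) (Set.Ioi s) s := by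
  split_ifs with h
  · refine ((hasDerivWithinAt_id s (Set.Ioi s)).sub_const a).congr (fun x hx => ?_) ?_
    · exact max_eq_left (sub_nonneg.2 (h.trans (le_of_lt hx)))
    · exact max_eq_left (sub_nonneg.2 h)
  · rw [not_le] at h
    refine HasDerivAt.hasDerivWithinAt ((hasDerivAt_const s (0 : ℝ)).congr_of_eventuallyEq ?_)
    filter_upwards [Iio_mem_nhds h] with x hx
    exact max_eq_right (sub_nonpos.2 (le_of_lt hx))

theorem integral_indicator_le (a b : ℝ) :
    ∫ s in (0 : ℝ)..b, (if a ≤ s then (1 : ℝ) else 0) = max (b - a) 0 - max (0 - a) 0 :=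
  intervalIntegral.integral_eq_sub_of_hasDeriv_right (f := fun s : ℝ => max (s - a) 0)
    (by fun_prop) (fun s _ => hasDerivWithinAt_posPart a s)
    (monotone_indicator_le a).intervalIntegrable

/-- **Knight's identity**: for all real `a`, `b` and all `τ ∈ [0,1]`,
`ρ_τ(a − b) − ρ_τ(a) = −b·(τ − 1{a ≤ 0}) + ∫₀ᵇ (1{a ≤ s} − 1{a ≤ 0}) ds`. -/
theorem knight_identity (τ a b : ℝ) (hτ0 : 0 ≤ τ) (hτ1 : τ ≤ 1) :
    checkLoss τ (a - b) - checkLoss τ a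
      = -b * (τ - if a ≤ 0 then 1 else 0)
        + ∫ s in (0:ℝ)..b, ((if a ≤ s then (1:ℝ) else 0) - (if a ≤ 0 then (1:ℝ) else 0)) := by
  rw [intervalIntegral.integral_sub (monotone_indicator_le a).intervalIntegrable
    intervalIntegrable_const, integral_indicator_le, intervalIntegral.integral_const]
  simp only [checkLoss, smul_eq_mul, max_def]
  split_ifs <;> linarith
end

section
/- Uniform consistency of extremum estimator processes (Lemma B.3): let Θ and T be compact metric spaces, Q_∞ : Θ × T → ℝ continuous, and θ₀ : T → Θ such that for each τ ∈ T, θ₀(τ) is the unique minimizer of θ ↦ Q_∞(θ, τ). Let (Ω, P) be a probability space, Qₙ : Ω → (Θ × T → ℝ) and θ̂ₙ : Ω → (T → Θ) be maps such that ω ↦ sup_{(θ,τ) ∈ Θ×T} |Qₙ(ω)(θ, τ) − Q_∞(θ, τ)| and ω ↦ sup_{τ ∈ T} dist(θ̂ₙ(ω)(τ), θ₀(τ)) are measurable, and let (αₙ) be a sequence of reals with αₙ → 0. Assume (i) for every ω and every τ ∈ T, Qₙ(ω)(θ̂ₙ(ω)(τ), τ) ≤ inf_{θ ∈ Θ} Qₙ(ω)(θ,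 τ) + αₙ, and (ii) for every ε > 0, P( sup_{(θ,τ)} |Qₙ(·)(θ, τ) − Q_∞(θ, τ)| > ε ) → 0 as n → ∞. Then for every ε > 0, P( sup_{τ ∈ T} dist(θ̂ₙ(·)(τ), θ₀(τ)) > ε ) → 0 as n → ∞. -/
open MeasureTheory Filter ENNReal

/-!
The proof is the argmin argument made uniform in `τ`. By compactness, points at distance at least
`ε` from `θ₀ τ` have criterion value exceeding the minimum by a gap `δ > 0` independent of `τ`
(`exists_uniform_gap`). When `Qₙ` is within `δ / 4` of `Q_∞` uniformly and `αₙ < δ / 2`,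
a near-minimizer of `Qₙ(·, τ)` has `Q_∞`-value less than `δ` above the minimum, hence lies within
`ε` of `θ₀ τ`. So the event in the conclusion is eventually contained in the event that the
uniform deviation exceeds `δ / 4`, whose probability tends to zero.
-/

/-- Uniform well-separation of the minimizers. Continuity of `θ₀` is not needed: compactness is
applied to the closed set of triples `(θ, θ', τ)` with `θ'` a minimizer at `τ` and
`ε ≤ dist θ θ'`. -/
lemma exists_uniform_gap {Θ T : Type*} [MetricSpace Θ] [CompactSpace Θ] [MetricSpace T]
    [CompactSpace T] (Q : Θ × T → ℝ) (hQ : Continuous Q) (θ₀ : T → Θ)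
    (hmin : ∀ τ : T, ∀ θ : Θ, θ ≠ θ₀ τ → Q (θ₀ τ, τ) < Q (θ, τ)) {ε : ℝ} (hε : 0 < ε) :
    ∃ δ : ℝ, 0 < δ ∧ ∀ τ θ, ε ≤ dist θ (θ₀ τ) → Q (θ₀ τ, τ) + δ ≤ Q (θ, τ) := by
  have hle : ∀ τ η, Q (θ₀ τ, τ) ≤ Q (η, τ) := fun τ η => by
    by_cases h : η = θ₀ τ
    · rw [h]
    · exact (hmin τ η h).le
  let K : Set (Θ × Θ × T) :=
    {x | ε ≤ dist x.1 x.2.1} ∩ {x | ∀ η, Q (x.2.1, x.2.2) ≤ Q (η, x.2.2)}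
  have hK : IsCompact K := by
    apply IsClosed.isCompact
    refine (isClosed_le (by fun_prop) (by fun_prop)).inter ?_
    simp only [Set.ofPred_forall]
    exact isClosed_iInter fun η => isClosed_le (by fun_prop) (by fun_prop)
  rcases K.eq_empty_or_nonempty with hE | hne
  · refine ⟨1, one_pos, fun τ θ h => ?_⟩
    have hx : (θ, θ₀ τ, τ) ∈ K := ⟨h, hle τ⟩
    simp [hE] at hx
  · obtain ⟨⟨a, b, t⟩, ⟨hab, hb⟩, hm⟩ := hK.exists_isMinOn hne
      (f := fun x => Q (x.1, x.2.2) - Q (x.2.1, x.2.2)) (by fun_prop)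
    simp only [Set.mem_ofPred_eq] at hab hb
    refine ⟨Q (a, t) - Q (b, t), ?_, fun τ θ h => ?_⟩
    · have hbt : b = θ₀ t := by
        by_contra hc
        exact absurd (hb (θ₀ t)) (not_le.mpr (hmin t b hc))
      have hne' : a ≠ θ₀ t := by
        rintro rfl
        rw [hbt, dist_self] at hab
        linarith
      rw [hbt]
      linarith [hmin t a hne']
    · have hx : (θ, θ₀ τ, τ) ∈ K := ⟨h, hle τ⟩
      have := isMinOn_iff.mp hm _ hx
      simp only at this
      linarith

/-- **Uniform consistency of extremum estimator processes** (Lemma B.3):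
near-minimizers of `Qₙ(·, τ)` converge, uniformly in `τ`, in probability to the
unique minimizer `θ₀(τ)` of the continuous limit criterion `Q_∞(·, τ)`. -/
theorem extremum_estimator_uniform_consistency
    {Θ T Ω : Type*} [MetricSpace Θ] [CompactSpace Θ] [MetricSpace T] [CompactSpace T]
    [MeasurableSpace Ω] (μ : Measure Ω) [IsProbabilityMeasure μ]
    (Qinf : Θ × T → ℝ) (hQcont : Continuous Qinf)
    (θ₀ : T → Θ)
    (hmin : ∀ τ : T, ∀ θ : Θ, θ ≠ θ₀ τ → Qinf (θ₀ τ, τ) < Qinf (θ, τ))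
    (Qn : ℕ → Ω → Θ × T → ℝ) (θhat : ℕ → Ω → T → Θ)
    (α : ℕ → ℝ) (hα : Tendsto α atTop (nhds 0))
    (hsupQmeas : ∀ n, Measurable fun ω =>
      ⨆ p : Θ × T, ENNReal.ofReal |Qn n ω p - Qinf p|)
    (hsupdmeas : ∀ n, Measurable fun ω => ⨆ τ : T, dist (θhat n ω τ) (θ₀ τ))
    (hnearmin : ∀ n ω (τ : T),
      Qn n ω (θhat n ω τ, τ) ≤ (⨅ θ : Θ, Qn n ω (θ, τ)) + α n)
    (hunif : ∀ ε : ℝ, 0 < ε →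
      Tendsto (fun n => μ {ω | ENNReal.ofReal ε <
          ⨆ p : Θ × T, ENNReal.ofReal |Qn n ω p - Qinf p|}) atTop (nhds 0)) :
    ∀ ε : ℝ, 0 < ε →
      Tendsto (fun n => μ {ω | ε < ⨆ τ : T, dist (θhat n ω τ) (θ₀ τ)})
        atTop (nhds 0) := by
  intro ε hε
  obtain ⟨δ, hδ, hgap⟩ := exists_uniform_gap Qinf hQcont θ₀ hmin hε
  refine tendsto_of_tendsto_of_tendsto_of_le_of_le' tendsto_const_nhds
    (hunif (δ / 4) (by positivity)) (Eventually.of_forall fun _ => zero_le) ?_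
  filter_upwards [hα.eventually (gt_mem_nhds (half_pos hδ))] with n hn
  refine measure_mono fun ω hω => ?_
  simp only [Set.mem_ofPred_eq] at hω ⊢
  by_contra hsup
  rw [not_lt] at hsup
  have hdev : ∀ p, |Qn n ω p - Qinf p| ≤ δ / 4 := fun p =>
    (ENNReal.ofReal_le_ofReal_iff (by positivity)).mp ((le_iSup _ p).trans hsup)
  refine absurd hω (not_lt.mpr (Real.iSup_le (fun τ => ?_) hε.le))
  by_contra hd
  have h1 := hgap τ _ (not_le.mp hd).le
  -- Without this lower bound, the real infimum would take its junk value `0`.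
  have hbdd : BddBelow (Set.range fun θ => Qn n ω (θ, τ)) := by
    refine ⟨Qinf (θ₀ τ, τ) - δ / 4, ?_⟩
    rintro _ ⟨θ, rfl⟩
    have h2 := (abs_le.mp (hdev (θ, τ))).1
    have h3 : Qinf (θ₀ τ, τ) ≤ Qinf (θ, τ) := by
      by_cases h : θ = θ₀ τ
      · rw [h]
      · exact (hmin τ θ h).le
    simp only
    linarith
  have h4 := ciInf_le hbdd (θ₀ τ)
  have h5 := (abs_le.mp (hdev (θ₀ τ, τ))).2
  have h6 := (abs_le.mp (hdev (θhat n ω τ, τ))).1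
  have h7 := hnearmin n ω τ
  linarith
end

section
/- Pointwise bound for the censored-quantile score differences (inequality (7.33)): define Ψ₂(y, x, β, τ) = 1{⟨x, β⟩ > 0}·(τ − 1{y − ⟨x, β⟩ < 0})·x for y ∈ ℝ, x, β ∈ ℝᵈ, τ ∈ [0,1]. Then for all y ∈ ℝ, x ∈ ℝᵈ, τ ∈ [0,1], and all b, β₀ ∈ ℝᵈ, ‖Ψ₂(y, x, b, τ) − Ψ₂(y, x, β₀, τ)‖ ≤ ‖x‖ · ( 1{ |⟨x, b⟩| ≤ ‖x‖·‖b − β₀‖ } + 1{ |y − ⟨x, b⟩| ≤ ‖x‖·‖b − β₀‖ } ). -/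
open RealInnerProductSpace

/-- The censored-quantile score
`Ψ₂(y, x, β, τ) = 1{⟨x, β⟩ > 0}·(τ − 1{y − ⟨x, β⟩ < 0})·x`. -/
noncomputable def Psi2 {d : ℕ} (y : ℝ) (x β : EuclideanSpace ℝ (Fin d)) (τ : ℝ) :
    EuclideanSpace ℝ (Fin d) :=
  ((if 0 < ⟪x, β⟫ then (1:ℝ) else 0) * (τ - if y - ⟪x, β⟫ < 0 then 1 else 0)) • x

/-- **Pointwise bound for censored-quantile score differences** (inequality
(7.33)): for `τ ∈ [0,1]`,
`‖Ψ₂(y,x,b,τ) − Ψ₂(y,x,β₀,τ)‖ ≤ ‖x‖·(1{|⟨x,b⟩| ≤ ‖x‖‖b−β₀‖} + 1{|y−⟨x,b⟩| ≤ ‖x‖‖b−β₀‖})`. -/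
theorem psi2_pointwise_bound {d : ℕ} (y : ℝ) (x : EuclideanSpace ℝ (Fin d))
    (τ : ℝ) (hτ0 : 0 ≤ τ) (hτ1 : τ ≤ 1) (b β₀ : EuclideanSpace ℝ (Fin d)) :
    ‖Psi2 y x b τ - Psi2 y x β₀ τ‖
      ≤ ‖x‖ * ((if |⟪x, b⟫| ≤ ‖x‖ * ‖b - β₀‖ then (1:ℝ) else 0)
               + (if |y - ⟪x, b⟫| ≤ ‖x‖ * ‖b - β₀‖ then (1:ℝ) else 0)) := by
  -- Cauchy–Schwarz: `⟨x, b⟩` and `⟨x, β₀⟩` differ by at most `‖x‖ * ‖b - β₀‖`.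
  have hst : |⟪x, b⟫ - ⟪x, β₀⟫| ≤ ‖x‖ * ‖b - β₀‖ := by
    rw [← inner_sub_right]
    exact abs_real_inner_le_norm x (b - β₀)
  unfold Psi2
  rw [← sub_smul, norm_smul, mul_comm, Real.norm_eq_abs]
  refine mul_le_mul_of_nonneg_left ?_ (norm_nonneg x)
  generalize ⟪x, b⟫ = s at *
  generalize ⟪x, β₀⟫ = t at *
  generalize ‖x‖ * ‖b - β₀‖ = r at *
  obtain ⟨h1, h2⟩ := abs_le.mp hst
  -- The scalar scores take values in `{0, τ, τ - 1}`, so they differ by at most one. If both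
  -- indicators on the right vanish, then `s` and `t` lie on the same side of `0` and of `y`,
  -- so the two scores agree.
  simp only [abs_le]
  split_ifs <;> first
    | (constructor <;> linarith)
    | (exfalso; grind)
end
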